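/- **Calculus.** Fix a set $Chan$ of channels and let $Act = Chan\cup\{\bar a\mid a\in Chan\}\cup\{\tau\}$. RCCS terms are: variables $X$; finite nondeterministic choices $\sum_{i\in I}\alpha_i.T_i$ with $\alpha_i\in Chan\cup\{\bar a\mid a\in Chan\}$ ($\mathbf 0$ is the empty one); random choices $\bigoplus_{i\in I}p_i\tau.T_i$ with $I$ finite, $|I|\ge 2$, $p_i\in(0,1)$, $\sum_i p_i=1$; compositions $S\,|\,T$; localizations $(a)T$; fixpoints $\mu X.T$ in which every free occurrence of $X$ in $T$ lies under a choice. $\mathcal P$ is the set of closed terms (processes), taken as syntactic objects. Transitions, with labels in $Act\cup\{p\tau\mid 0<p<1\}$ and $1\tau=\tau$: $\sum_i\alpha_i.T_i\xrightarrow{\alpha_i}T_i$; $\bigoplus_i p_i\tau.T_i\xrightarrow{p_i\tau}T_i$; $S|T\xrightarrow{\tau}S'|T'$ if $S\xrightarrow{\bar\alpha}S'$ and $T\xrightarrow{\alpha}T'$ (where $\bar{\bar a}=a$); $S|T\xrightarrow{\lambda}S'|T$ if $S\xrightarrow{\lambda}S'$, and symmetrically; $(a)T\xrightarrow{\lambda}(a)T'$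 if $T\xrightarrow{\lambda}T'$ and $\lambda\notin\{a,\bar a\}$; $\mu X.T\xrightarrow{\lambda}T'$ if $T\{\mu X.T/X\}\xrightarrow{\lambda}T'$. A collective random transition of a process consists of all the transitions $\xrightarrow{p_i\tau}$ that one single random choice gives rise to. **Bisimulation.** Let $\mathcal E$ be an equivalence on $\mathcal P$. An $\epsilon$-tree of $A$ (with regard to $\mathcal E$) is a finitely branching rooted tree, possibly infinite, with nodes labeled by members of the class $[A]_{\mathcal E}$, root labeled $A$, and edges labeled by numbers in $(0,1]$, such that at every node, labeled $B$, one of the following holds: it is a leaf; it has a single child, labeled $B'$, with edge label $1$ and $B\xrightarrow{\tau}B'$; or its children and their edge labels are exactly the $B_i$ and $p_i$ of one collective random transition of $B$. Let $\mathsf P^f(t)\in[0,1]$ be the sum, over the leaves of $t$, of the product of the edge labels on the path from the root to that leaf; $t$ is *regular* if $\mathsf P^f(t)=1$ and *divergent* if $\mathsf P^f(t)=0$. $\mathcal E$ is *codivergent* if in each $\mathcal E$-class either every member or no member has a divergent $\epsilon$-tree. For $\ell\in Act$ and an $\mathcal E$-class $\mathcal C$, write $A\rightsquigarrow_{\mathcal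 E}\xrightarrow{\ell}\mathcal C$ if $A$ has a regular $\epsilon$-tree each leaf $L$ of which has a transition $L\xrightarrow{\ell}L'\in\mathcal C$. For $q\in(0,1]$ and a class $\mathcal C\ne[A]_{\mathcal E}$, write $A\rightsquigarrow_{\mathcal E}\xrightarrow{q}\mathcal C$ if $A$ has a regular $\epsilon$-tree each leaf $L$ of which has a collective random transition with probabilities $p_i$ and targets $L_i$ such that $\sum_{L_i\in\mathcal C}p_i = q\,\bigl(1-\sum_{L_i\in[A]_{\mathcal E}}p_i\bigr)$, the factor in parentheses being nonzero. $\mathcal E$ is a *branching bisimulation* if for all $A\,\mathcal E\,B$ and all classes $\mathcal C$: $A\rightsquigarrow_{\mathcal E}\xrightarrow{\ell}\mathcal C$ implies $B\rightsquigarrow_{\mathcal E}\xrightarrow{\ell}\mathcal C$ whenever $\ell\ne\tau$ or $\mathcal C\ne[A]_{\mathcal E}$; and $A\rightsquigarrow_{\mathcal E}\xrightarrow{q}\mathcal C$ implies $B\rightsquigarrow_{\mathcal E}\xrightarrow{q}\mathcal C$ whenever $q\in(0,1]$ and $\mathcal C\ne[A]_{\mathcal E}$. Finally $=_{\mathrm{RCCS}}$,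 the largest codivergent branching bisimulation, is the union of all codivergent branching bisimulations on $\mathcal P$. **Statement.** Let $a$, $b$, $c$ be pairwise distinct channels. Write $a.\mathbf 0+\tau.T$ for $(c)(\bar c.\mathbf 0\,|\,(a.\mathbf 0+c.T))$, likewise with $b$ in place of $a$, and $a.\mathbf 0+b.\mathbf 0+\tau.T$ for $(c)(\bar c.\mathbf 0\,|\,(a.\mathbf 0+b.\mathbf 0+c.T))$. Put $$H=\mu X.\bigl(\tfrac12\tau.(a.\mathbf 0+\tau.X)\oplus\tfrac12\tau.(b.\mathbf 0+\tau.X)\bigr),\quad H_a=a.\mathbf 0+\tau.H,\quad H_b=b.\mathbf 0+\tau.H,\quad E=\mu X.(a.\mathbf 0+b.\mathbf 0+\tau.X).$$ Since a derived prefix $\tau.T$ literally evolves to $(c)(\mathbf 0\,|\,T)$ rather than to $T$, processes are considered modulo this residue. Precisely, the least equivalence relation on $\mathcal P$ that contains $(H,H_a)$, $(H,H_b)$, $(H,E)$, and all pairs $\bigl(A,(c)(\mathbf 0\,|\,A)\bigr)$ with $A\in\mathcal P$ in which $c$ does not occur free, is a codivergent branching bisimulation on $\mathcal P$. In particular $H=_{\mathrm{RCCS}}E$,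 that is, $H=_{\mathrm{RCCS}}\mu X.(a.\mathbf 0+b.\mathbf 0+\tau.X)$. -/

import Mathlib

noncomputable section

universe u

/-- RCCS terms over a set of channels, with de Bruijn process variables.
`sum n α T` is the nondeterministic choice `Σ_{i∈[n]} α_i.T_i` (guards are
names `Sum.inl a` or conames `Sum.inr a`); `rand n p T` is the random choice
`⊕_{i∈[n]} p_i τ.T_i`; `par` is composition, `loc a T` is localization `(a)T`,
and `fix T` is the fixpoint `μX.T`. -/
inductive Tm (Chan : Type u) : Type u
  | var : ℕ → Tm Chan
  | sum : (n : ℕ) → (Fin n → Chan ⊕ Chan) → (Fin n → Tm Chan) → Tm Chan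
  | rand : (n : ℕ) → (Fin n → ℝ) → (Fin n → Tm Chan) → Tm Chan
  | par : Tm Chan → Tm Chan → Tm Chan
  | loc : Chan → Tm Chan → Tm Chan
  | fix : Tm Chan → Tm Chan

variable {Chan : Type u}

/-- Labels: names, conames, and `tau p` for `p ∈ (0,1]`; `tau 1` is the plain
silent action `τ`, identified with `1τ`. -/
inductive Lab (Chan : Type u) : Type u
  | name : Chan → Lab Chan
  | coname : Chan → Lab Chan
  | tau : ℝ → Lab Chan

/-- The label of an external prefix. -/
def guardLab : Chan ⊕ Chan → Lab Chan
  | .inl a => .name a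
  | .inr a => .coname a

/-- A label is an action in `Act` if it is a name, a coname, or `τ = 1τ`. -/
def Lab.IsAct : Lab Chan → Prop
  | .name _ => True
  | .coname _ => True
  | .tau p => p = 1

/-- Shift de Bruijn indices `≥ c` up by one. -/
def Tm.lift : ℕ → Tm Chan → Tm Chan
  | c, .var n => .var (if n < c then n else n + 1)
  | c, .sum n α T => .sum n α fun i => Tm.lift c (T i)
  | c, .rand n p T => .rand n p fun i => Tm.lift c (T i)
  | c, .par S T => .par (Tm.lift c S) (Tm.lift c T)
  | c, .loc a T => .loc a (Tm.lift c T)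
  | c, .fix T => .fix (Tm.lift (c + 1) T)

/-- Capture-avoiding substitution of the term `S` for variable `c`
(other variables above `c` are shifted down). -/
def Tm.inst : ℕ → Tm Chan → Tm Chan → Tm Chan
  | c, S, .var n => if n < c then .var n else if n = c then S else .var (n - 1)
  | c, S, .sum n α T => .sum n α fun i => Tm.inst c S (T i)
  | c, S, .rand n p T => .rand n p fun i => Tm.inst c S (T i)
  | c, S, .par S' T => .par (Tm.inst c S S') (Tm.inst c S T)
  | c, S, .loc a T => .loc a (Tm.inst c S T)
  | c, S, .fix T => .fix (Tm.inst (c + 1) (Tm.lift 0 S) T)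

/-- All free variables are `< k`. -/
def Tm.ClosedAt : ℕ → Tm Chan → Prop
  | k, .var n => n < k
  | k, .sum _ _ T => ∀ i, Tm.ClosedAt k (T i)
  | k, .rand _ _ T => ∀ i, Tm.ClosedAt k (T i)
  | k, .par S T => Tm.ClosedAt k S ∧ Tm.ClosedAt k T
  | k, .loc _ T => Tm.ClosedAt k T
  | k, .fix T => Tm.ClosedAt (k + 1) T

/-- Variable `v` is guarded: every free occurrence of `v` is under a prefix. -/
def Tm.Guarded : ℕ → Tm Chan → Prop
  | v, .var n => n ≠ v
  | _, .sum _ _ _ => True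
  | _, .rand _ _ _ => True
  | v, .par S T => Tm.Guarded v S ∧ Tm.Guarded v T
  | v, .loc _ T => Tm.Guarded v T
  | v, .fix T => Tm.Guarded (v + 1) T

/-- Well-formedness: in every random choice `⊕_{i∈I} p_i τ.T_i` we have `|I| ≥ 2`,
`p_i ∈ (0,1)` and `Σ_i p_i = 1`; in every fixpoint `μX.T` the variable `X` is
guarded in `T`. -/
def Tm.WF : Tm Chan → Prop
  | .var _ => True
  | .sum _ _ T => ∀ i, Tm.WF (T i)
  | .rand n p T => 2 ≤ n ∧ (∀ i, 0 < p i ∧ p i < 1) ∧ (∑ i, p i) = 1 ∧ ∀ i, Tm.WF (T i)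
  | .par S T => Tm.WF S ∧ Tm.WF T
  | .loc _ T => Tm.WF T
  | .fix T => Tm.Guarded 0 T ∧ Tm.WF T

/-- The channel `c` occurs free in a term (it is bound by localization `(c)T`). -/
def Tm.FreeIn (c : Chan) : Tm Chan → Prop
  | .var _ => False
  | .sum _ α T => ∃ i, α i = Sum.inl c ∨ α i = Sum.inr c ∨ Tm.FreeIn c (T i)
  | .rand _ _ T => ∃ i, Tm.FreeIn c (T i)
  | .par S T => Tm.FreeIn c S ∨ Tm.FreeIn c T
  | .loc a T => c ≠ a ∧ Tm.FreeIn c T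
  | .fix T => Tm.FreeIn c T

/-- The transition relation of RCCS. -/
inductive Step : Tm Chan → Lab Chan → Tm Chan → Prop
  | sum {n α T} (i : Fin n) : Step (.sum n α T) (guardLab (α i)) (T i)
  | rand {n p T} (i : Fin n) : Step (.rand n p T) (.tau (p i)) (T i)
  | comL {S S' T T' a} : Step S (.name a) S' → Step T (.coname a) T' →
      Step (.par S T) (.tau 1) (.par S' T')
  | comR {S S' T T' a} : Step S (.coname a) S' → Step T (.name a) T' →
      Step (.par S T) (.tau 1) (.par S' T')
  | parL {S S' T l} : Step S l S' → Step (.par S T) l (.par S' T)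
  | parR {S T T' l} : Step T l T' → Step (.par S T) l (.par S T')
  | loc {T T' l} (a : Chan) : Step T l T' → l ≠ .name a → l ≠ .coname a →
      Step (.loc a T) l (.loc a T')
  | fix {T T' l} : Step (Tm.inst 0 (.fix T) T) l T' → Step (.fix T) l T'

/-- Collective silent transitions `B →^{∐_{i∈[n]} p_i τ} ∐_{i∈[n]} B_i`,
arising from a single random choice and closed under composition,
localization and recursion. -/
inductive CStep : Tm Chan → (n : ℕ) → (Fin n → ℝ) → (Fin n → Tm Chan) → Prop
  | rand {n p T} : CStep (.rand n p T) n p T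
  | parL {S T n p S'} : CStep S n p S' → CStep (.par S T) n p fun i => .par (S' i) T
  | parR {S T n p T'} : CStep T n p T' → CStep (.par S T) n p fun i => .par S (T' i)
  | loc {T n p T'} (a : Chan) : CStep T n p T' → CStep (.loc a T) n p fun i => .loc a (T' i)
  | fix {T n p T'} : CStep (Tm.inst 0 (.fix T) T) n p T' → CStep (.fix T) n p T'

/-- The set `P_RCCS` of RCCS processes: closed well-formed terms. -/
def Proc (Chan : Type u) : Type u := {T : Tm Chan // T.ClosedAt 0 ∧ T.WF}

/-- A (potential) silent tree: nodes are addressed by reversed lists of child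
indices (the root is `[]`, the `i`-th child of `σ` is `i :: σ`); each node
carries a process label and the probability labelling its incoming edge
(the root carries `1`). -/
structure PTree (Chan : Type u) where
  node : List ℕ → Option (Proc Chan × ℝ)

namespace PTree

variable (t : PTree Chan)

/-- The address `σ` is a node of the tree. -/
def hasNode (σ : List ℕ) : Prop := (t.node σ).isSome

/-- The probability labelling the incoming edge of the node at `σ`. -/
def edgeProb (σ : List ℕ) : ℝ := ((t.node σ).map Prod.snd).getD 0

/-- The probability of the path from the root to `σ`: the product of the edge
labels along it (`1` for the empty path). -/
def pathProb (t : PTree Chan) : List ℕ → ℝ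
  | [] => 1
  | i :: σ => t.edgeProb (i :: σ) * pathProb t σ

/-- `σ` is a leaf. -/
def IsLeaf (σ : List ℕ) : Prop := t.hasNode σ ∧ ¬ t.hasNode (0 :: σ)

open scoped Classical in
/-- `P^k(t)`: the sum of the probabilities of the finite branches of `t` of
length at most `k`. -/
def finBranchProb (k : ℕ) : ℝ :=
  ∑' σ : List ℕ, if t.IsLeaf σ ∧ σ.length ≤ k then t.pathProb σ else 0

/-- `t` is regular: `P^f(t) = lim_k P^k(t) = 1`. -/
def Regular : Prop := Filter.Tendsto t.finBranchProb Filter.atTop (nhds 1)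

/-- `t` is divergent: `P^f(t) = lim_k P^k(t) = 0`. -/
def Divergent : Prop := Filter.Tendsto t.finBranchProb Filter.atTop (nhds 0)

end PTree

/-- `t` is a silent tree of `A`: the root is labeled `A`, the node set is
prefix-closed with children indexed by an initial segment of `ℕ`, the tree is
finitely branching, and every edge labeled `p` from `B` to `B'` satisfies
`p ∈ (0,1]` and `B →^{pτ} B'`. -/
def IsSilentTree (A : Proc Chan) (t : PTree Chan) : Prop :=
  t.node [] = some (A, 1) ∧
  (∀ i σ, t.hasNode (i :: σ) → t.hasNode σ) ∧
  (∀ i j σ, j ≤ i → t.hasNode (i :: σ) → t.hasNode (j :: σ)) ∧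
  (∀ σ, ∃ n, ∀ i, n ≤ i → ¬ t.hasNode (i :: σ)) ∧
  (∀ σ i B p B' p', t.node σ = some (B, p) → t.node (i :: σ) = some (B', p') →
    0 < p' ∧ p' ≤ 1 ∧ Step B.val (.tau p') B'.val)

/-- An ε-tree of `A` with regard to `E`: an `E`-tree of `A` (all node labels lie
in `[A]_E`) such that (1) any edge labeled `q < 1` out of a node `B` comes from a
collective random transition whose targets are exactly the children of `B`, and
(2) an edge labeled `1` out of `B` is a transition `B →^τ B'` to the unique
child `B'` of `B`. -/
def IsETree (E : Proc Chan → Proc Chan → Prop) (A : Proc Chan) (t : PTree Chan) : Prop :=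
  IsSilentTree A t ∧
  (∀ σ B p, t.node σ = some (B, p) → E A B) ∧
  (∀ σ i B p B' q, t.node σ = some (B, p) → t.node (i :: σ) = some (B', q) → q < 1 →
    ∃ n ps Ts, CStep B.val n ps Ts ∧
      (∀ j : ℕ, t.hasNode (j :: σ) ↔ j < n) ∧
      (∀ j : Fin n, ∃ C : Proc Chan, C.val = Ts j ∧ t.node ((j : ℕ) :: σ) = some (C, ps j))) ∧
  (∀ σ i B p B', t.node σ = some (B, p) → t.node (i :: σ) = some (B', 1) →
    Step B.val (.tau 1) B'.val ∧ i = 0 ∧ ¬ t.hasNode (1 :: σ))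

/-- The `E`-class of `A`. -/
def classOf (E : Proc Chan → Proc Chan → Prop) (A : Proc Chan) : Set (Proc Chan) := {B | E A B}

/-- `C` is an equivalence class of `E`. -/
def IsClass (E : Proc Chan → Proc Chan → Prop) (C : Set (Proc Chan)) : Prop :=
  ∃ A, C = classOf E A

/-- An equivalence `E` on `P_RCCS` is codivergent if for every `E`-class either
all members have a divergent ε-tree with regard to `E` or none does. -/
def Codivergent (E : Proc Chan → Proc Chan → Prop) : Prop :=
  ∀ A B, E A B →
    ((∃ t, IsETree E A t ∧ t.Divergent) ↔ (∃ t, IsETree E B t ∧ t.Divergent))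

/-- An ℓ-transition `A ⇝_E →^ℓ C`: a regular ε-tree of `A` with regard to `E`
such that every leaf `L` has a transition `L →^ℓ L'` with `L' ∈ C`. -/
def LTrans (E : Proc Chan → Proc Chan → Prop) (A : Proc Chan) (l : Lab Chan)
    (C : Set (Proc Chan)) : Prop :=
  ∃ t, IsETree E A t ∧ t.Regular ∧
    ∀ σ L p, t.node σ = some (L, p) → ¬ t.hasNode (0 :: σ) →
      ∃ L' ∈ C, Step L.val l L'.val

/-- The raw term `T` belongs to the set `C` of processes. -/
def inC (C : Set (Proc Chan)) (T : Tm Chan) : Prop := ∃ P ∈ C, P.val = T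

open scoped Classical in
/-- `P(L → C)` of a collective silent transition: the sum of the `p_i` whose
target lies in `C`. -/
def collProb (C : Set (Proc Chan)) {n : ℕ} (ps : Fin n → ℝ) (Ts : Fin n → Tm Chan) : ℝ :=
  ∑ i, if inC C (Ts i) then ps i else 0

/-- A `q`-transition `A ⇝_E →^q C`: a regular ε-tree of `A` with regard to `E`
such that every leaf has a collective silent transition whose weighted
probability `P_E(L → C) = P(L → C)/(1 − P(L → [A]_E))` of reaching `C` is `q`. -/
def QTrans (E : Proc Chan → Proc Chan → Prop) (A : Proc Chan) (q : ℝ)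
    (C : Set (Proc Chan)) : Prop :=
  ∃ t, IsETree E A t ∧ t.Regular ∧
    ∀ σ L p, t.node σ = some (L, p) → ¬ t.hasNode (0 :: σ) →
      ∃ (n : ℕ) (ps : Fin n → ℝ) (Ts : Fin n → Tm Chan), CStep L.val n ps Ts ∧
        collProb C ps Ts / (1 - collProb (classOf E A) ps Ts) = q

/-- `E` is a branching bisimulation on `P_RCCS`: an equivalence such that
(1) ℓ-transitions with `ℓ ≠ τ ∨ C ≠ [A]_E` are bisimulated by all members of
`[A]_E`, and (2) likewise for `q`-transitions with `q ∈ (0,1]` and `C ≠ [A]_E`. -/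
def IsBB (E : Proc Chan → Proc Chan → Prop) : Prop :=
  Equivalence E ∧
  (∀ A B l C, l.IsAct → IsClass E C → E A B → (l ≠ Lab.tau 1 ∨ C ≠ classOf E A) →
    LTrans E A l C → LTrans E B l C) ∧
  (∀ A B q C, 0 < q → q ≤ 1 → IsClass E C → E A B → C ≠ classOf E A →
    QTrans E A q C → QTrans E B q C)

/-- `E` is a codivergent branching bisimulation on `P_RCCS`. -/
def IsCBB (E : Proc Chan → Proc Chan → Prop) : Prop := IsBB E ∧ Codivergent E

/-- `=_RCCS`, the largest codivergent branching bisimulation: the union of all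
codivergent branching bisimulations. -/
def RccsEq (A B : Proc Chan) : Prop := ∃ E, IsCBB E ∧ E A B

/-! ### Concrete processes -/

/-- The empty nondeterministic choice `0`. -/
def Tm.nil : Tm Chan := .sum 0 Fin.elim0 Fin.elim0

/-- The prefix `α.T`. -/
def pfx (g : Chan ⊕ Chan) (T : Tm Chan) : Tm Chan := .sum 1 (fun _ => g) (fun _ => T)

/-- The binary choice `α₁.T₁ + α₂.T₂`. -/
def sum2 (g₁ g₂ : Chan ⊕ Chan) (T₁ T₂ : Tm Chan) : Tm Chan := .sum 2 ![g₁, g₂] ![T₁, T₂]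

/-- The binary random choice `pτ.T₁ ⊕ qτ.T₂`. -/
def rand2 (p q : ℝ) (T₁ T₂ : Tm Chan) : Tm Chan := .rand 2 ![p, q] ![T₁, T₂]

/-- `c̄.0`. -/
def coNil (c : Chan) : Tm Chan := pfx (Sum.inr c) Tm.nil

/-- `a.T' + τ.T`, the abbreviation `(c)(c̄.0 | (a.T' + c.T))` for a fresh `c`. -/
def plusTau (a c : Chan) (T' T : Tm Chan) : Tm Chan :=
  .loc c (.par (coNil c) (sum2 (Sum.inl a) (Sum.inl c) T' T))

/-- `H = μX.(½τ.(a.0 + τ.X) ⊕ ½τ.(b.0 + τ.X))`. -/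
def Htm (a b c : Chan) : Tm Chan :=
  .fix (rand2 (1/2) (1/2) (plusTau a c Tm.nil (.var 0)) (plusTau b c Tm.nil (.var 0)))

/-- `H_a = a.0 + τ.H`. -/
def HaTm (a b c : Chan) : Tm Chan := plusTau a c Tm.nil (Htm a b c)

/-- `H_b = b.0 + τ.H`. -/
def HbTm (a b c : Chan) : Tm Chan := plusTau b c Tm.nil (Htm a b c)

/-- `a.0 + b.0 + τ.T`, the abbreviation `(c)(c̄.0 | (a.0 + b.0 + c.T))`. -/
def plus3 (a b c : Chan) (T : Tm Chan) : Tm Chan :=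
  .loc c (.par (coNil c) (.sum 3 ![Sum.inl a, Sum.inl b, Sum.inl c] ![Tm.nil, Tm.nil, T]))

/-- `E = μX.(a.0 + b.0 + τ.X)`. -/
def Etm (a b c : Chan) : Tm Chan := .fix (plus3 a b c (.var 0))

lemma Htm_spec (a b c : Chan) : (Htm a b c).ClosedAt 0 ∧ (Htm a b c).WF := by
  refine ⟨?_, ?_⟩ <;>
    simp [Htm, rand2, plusTau, sum2, coNil, pfx, Tm.nil, Tm.ClosedAt, Tm.WF, Tm.Guarded,
      Fin.forall_fin_two, Fin.sum_univ_two] <;> norm_num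

lemma HaTm_spec (a b c : Chan) : (HaTm a b c).ClosedAt 0 ∧ (HaTm a b c).WF := by
  refine ⟨?_, ?_⟩ <;>
    simp [HaTm, Htm, rand2, plusTau, sum2, coNil, pfx, Tm.nil, Tm.ClosedAt, Tm.WF, Tm.Guarded,
      Fin.forall_fin_two, Fin.sum_univ_two] <;> norm_num

lemma HbTm_spec (a b c : Chan) : (HbTm a b c).ClosedAt 0 ∧ (HbTm a b c).WF := by
  refine ⟨?_, ?_⟩ <;>
    simp [HbTm, Htm, rand2, plusTau, sum2, coNil, pfx, Tm.nil, Tm.ClosedAt, Tm.WF, Tm.Guarded,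
      Fin.forall_fin_two, Fin.sum_univ_two] <;> norm_num

lemma Etm_spec (a b c : Chan) : (Etm a b c).ClosedAt 0 ∧ (Etm a b c).WF := by
  refine ⟨?_, ?_⟩ <;>
    simp [Etm, plus3, coNil, pfx, Tm.nil, Tm.ClosedAt, Tm.WF, Tm.Guarded,
      Fin.forall_fin_succ, Fin.forall_fin_two]

/-- `H` as a process. -/
def HP (a b c : Chan) : Proc Chan := ⟨Htm a b c, Htm_spec a b c⟩
/-- `H_a` as a process. -/
def HaP (a b c : Chan) : Proc Chan := ⟨HaTm a b c, HaTm_spec a b c⟩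
/-- `H_b` as a process. -/
def HbP (a b c : Chan) : Proc Chan := ⟨HbTm a b c, HbTm_spec a b c⟩
/-- `E` as a process. -/
def EP (a b c : Chan) : Proc Chan := ⟨Etm a b c, Etm_spec a b c⟩

/-- `(c)(0 | A)`. This is what a process `(c)(c̄.0 | (… + c.A))`, abbreviated `… + τ.A`,
literally becomes when it performs the prefix `τ`: the process `A` in a context that is
inert as long as `c` is not free in `A`. -/
def residue (c : Chan) (A : Proc Chan) : Proc Chan :=
  ⟨.loc c (.par Tm.nil A.val),
    ⟨fun i => i.elim0, A.property.1⟩, ⟨fun i => i.elim0, A.property.2⟩⟩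

end

/-!
On the class of `H` every silent transition stays inside the class, so a transition that leaves the
class is an external action `a` or `b` into the class of `(c)(c̄.0 | 0)`, and no `q`-transition
leaves it. Conversely every member of the class can do both actions: `H` answers `a` by flipping its
coin until it hits `H_a`, and the resulting `ε`-tree is regular because `k` unlucky flips have
probability `2⁻ᵏ`; flipping for ever gives the divergent `ε`-tree that matches the `τ`-loop of `E`.
On the other classes only the pairs `A`, `(c)(0 | A)` have to be checked, and when `c` is not free
in `A` the residue is an isomorphism of transition systems, along which `ε`-trees can be relabelled.
-/

section

variable {Chan : Type*}

/-! ### Free channels -/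

lemma Tm.FreeIn.of_lift {c : Chan} {T : Tm Chan} {k : ℕ} (h : (T.lift k).FreeIn c) :
    T.FreeIn c := by
  induction T generalizing k with
  | var n => exact h
  | sum n α T ih => exact h.imp fun i => Or.imp_right (Or.imp_right (ih i))
  | rand n p T ih => exact h.imp fun i => ih i
  | par S T ihS ihT => exact h.imp ihS ihT
  | loc a T ih => exact h.imp_right ih
  | fix T ih => exact ih (k := k + 1) h

lemma Tm.FreeIn.of_inst {c : Chan} {S T : Tm Chan} {k : ℕ} (h : (Tm.inst k S T).FreeIn c) :
    S.FreeIn c ∨ T.FreeIn c := by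
  induction T generalizing k S with
  | var n =>
    simp only [Tm.inst] at h
    split_ifs at h
    exacts [h.elim, .inl h, h.elim]
  | sum n α T ih =>
    obtain ⟨i, hi | hi | hi⟩ := h
    exacts [.inr ⟨i, .inl hi⟩, .inr ⟨i, .inr (.inl hi)⟩,
      (ih i hi).imp_right fun h => ⟨i, .inr (.inr h)⟩]
  | rand n p T ih =>
    obtain ⟨i, hi⟩ := h
    exact (ih i hi).imp_right fun h => ⟨i, h⟩
  | par S' T ihS ihT =>
    rcases h with h | h
    exacts [(ihS h).imp_right .inl, (ihT h).imp_right .inr]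
  | loc a T ih => exact (ih h.2).imp_right fun hT => ⟨h.1, hT⟩
  | fix T ih => exact (ih (k := k + 1) h).imp_left .of_lift

lemma Tm.FreeIn.fix_of_inst {c : Chan} {T : Tm Chan} (h : (Tm.inst 0 (.fix T) T).FreeIn c) :
    (Tm.fix T).FreeIn c :=
  h.of_inst.elim id id

lemma Step.freeIn_of_target {c : Chan} {T T' : Tm Chan} {l : Lab Chan} (h : Step T l T')
    (hc : T'.FreeIn c) : T.FreeIn c := by
  induction h with
  | sum i => exact ⟨i, .inr (.inr hc)⟩
  | rand i => exact ⟨i, hc⟩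
  | comL _ _ ihS ihT => exact hc.imp ihS ihT
  | comR _ _ ihS ihT => exact hc.imp ihS ihT
  | parL _ ih => exact hc.imp_left ih
  | parR _ ih => exact hc.imp_right ih
  | loc a _ _ _ ih => exact hc.imp_right ih
  | fix _ ih => exact (ih hc).fix_of_inst

lemma Step.freeIn_of_label {c : Chan} {T T' : Tm Chan} {l : Lab Chan} (h : Step T l T')
    (hl : l = .name c ∨ l = .coname c) : T.FreeIn c := by
  induction h with
  | @sum n α T i =>
    refine ⟨i, ?_⟩
    cases hα : α i <;> simp_all [guardLab]
  | rand | comL | comR => simp at hl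
  | parL _ ih => exact .inl (ih hl)
  | parR _ ih => exact .inr (ih hl)
  | loc a _ hname hconame ih =>
    refine ⟨?_, ih hl⟩
    rintro rfl
    exact hl.elim hname hconame
  | fix _ ih => exact (ih hl).fix_of_inst

/-! ### Inversion of transitions -/

lemma CStep.step {T : Tm Chan} {n : ℕ} {p : Fin n → ℝ} {Ts : Fin n → Tm Chan}
    (h : CStep T n p Ts) (i : Fin n) : Step T (.tau (p i)) (Ts i) := by
  induction h with
  | rand => exact .rand i
  | parL _ ih => exact .parL (ih i)
  | parR _ ih => exact .parR (ih i)
  | loc a _ ih => exact .loc a (ih i) (by simp) (by simp)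
  | fix _ ih => exact .fix (ih i)

lemma Step.sum_inv {n : ℕ} {α : Fin n → Chan ⊕ Chan} {T : Fin n → Tm Chan} {l : Lab Chan}
    {T' : Tm Chan} (h : Step (.sum n α T) l T') : ∃ i, l = guardLab (α i) ∧ T' = T i := by
  cases h with
  | sum i => exact ⟨i, rfl, rfl⟩

lemma not_step_nil {l : Lab Chan} {T : Tm Chan} : ¬ Step Tm.nil l T := fun h =>
  h.sum_inv.elim fun i _ => i.elim0

/-! ### Equivalence classes -/

section Classes

variable {E : Proc Chan → Proc Chan → Prop} {A B : Proc Chan} {C : Set (Proc Chan)}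

lemma IsClass.mem_iff_of_rel (hE : Equivalence E) (hC : IsClass E C) (h : E A B) :
    A ∈ C ↔ B ∈ C := by
  obtain ⟨D, rfl⟩ := hC
  exact ⟨fun hA => hE.trans hA h, fun hB => hE.trans hB (hE.symm h)⟩

lemma IsClass.eq_classOf (hE : Equivalence E) (hC : IsClass E C) (hA : A ∈ C) :
    C = classOf E A := by
  obtain ⟨D, rfl⟩ := hC
  exact Set.ext fun B => ⟨fun h => hE.trans (hE.symm hA) h, fun h => hE.trans hA h⟩

lemma classOf_eq_of_rel (hE : Equivalence E) (h : E A B) : classOf E A = classOf E B :=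
  IsClass.eq_classOf hE ⟨A, rfl⟩ h

end Classes

/-! ### Matching of transitions -/

/-- `B` answers the divergence, the `ℓ`-transitions and the `q`-transitions of `A` in the way a
codivergent branching bisimulation requires. -/
structure Matches (E : Proc Chan → Proc Chan → Prop) (A B : Proc Chan) : Prop where
  divergent : (∃ t, IsETree E A t ∧ t.Divergent) → ∃ t, IsETree E B t ∧ t.Divergent
  lTrans : ∀ {l C}, l.IsAct → IsClass E C → (l ≠ Lab.tau 1 ∨ C ≠ classOf E A) →
    LTrans E A l C → LTrans E B l C
  qTrans : ∀ {q C}, 0 < q → q ≤ 1 → IsClass E C → C ≠ classOf E A →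
    QTrans E A q C → QTrans E B q C

lemma Matches.refl (E : Proc Chan → Proc Chan → Prop) (A : Proc Chan) : Matches E A A :=
  ⟨id, fun _ _ _ => id, fun _ _ _ _ => id⟩

lemma Matches.trans {E : Proc Chan → Proc Chan → Prop} {A B D : Proc Chan} (hE : Equivalence E)
    (hAB : E A B) (h₁ : Matches E A B) (h₂ : Matches E B D) : Matches E A D where
  divergent := h₂.divergent ∘ h₁.divergent
  lTrans hl hC hne h := h₂.lTrans hl hC (classOf_eq_of_rel hE hAB ▸ hne) (h₁.lTrans hl hC hne h)
  qTrans hq hq' hC hne h :=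
    h₂.qTrans hq hq' hC (classOf_eq_of_rel hE hAB ▸ hne) (h₁.qTrans hq hq' hC hne h)

lemma isCBB_of_matches {E : Proc Chan → Proc Chan → Prop} (hE : Equivalence E)
    (h : ∀ A B, E A B → Matches E A B) : IsCBB E :=
  ⟨⟨hE, fun A B _ _ hl hC hAB => (h A B hAB).lTrans hl hC,
      fun A B _ _ hq hq' hC hAB => (h A B hAB).qTrans hq hq' hC⟩,
    fun A B hAB => ⟨(h A B hAB).divergent, (h B A (hE.symm hAB)).divergent⟩⟩

lemma isCBB_eqvGen {r : Proc Chan → Proc Chan → Prop}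
    (h : ∀ A B, r A B → Matches (Relation.EqvGen r) A B ∧ Matches (Relation.EqvGen r) B A) :
    IsCBB (Relation.EqvGen r) := by
  have hE := Relation.EqvGen.is_equivalence r
  suffices hmatch : ∀ A B, Relation.EqvGen r A B →
      Matches (Relation.EqvGen r) A B ∧ Matches (Relation.EqvGen r) B A from
    isCBB_of_matches hE fun A B hAB => (hmatch A B hAB).1
  intro A B hAB
  induction hAB with
  | rel A B hAB => exact h A B hAB
  | refl A => exact ⟨.refl _ A, .refl _ A⟩
  | symm A B _ ih => exact ih.symm
  | trans A B D hAB hBD ihAB ihBD =>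
    exact ⟨ihAB.1.trans hE hAB ihBD.1, ihBD.2.trans hE (hE.symm hBD) ihAB.2⟩

/-! ### Relabelling of trees -/

namespace PTree

/-- The tree `t` with the process labels changed by `f`. -/
def map (f : Proc Chan → Proc Chan) (t : PTree Chan) : PTree Chan :=
  ⟨fun σ => (t.node σ).map (Prod.map f id)⟩

variable (f : Proc Chan → Proc Chan) (t : PTree Chan)

lemma map_node_eq_some {σ : List ℕ} {B : Proc Chan} {p : ℝ} :
    (t.map f).node σ = some (B, p) ↔ ∃ A, t.node σ = some (A, p) ∧ f A = B := by
  simp [map]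

lemma map_hasNode (σ : List ℕ) : (t.map f).hasNode σ ↔ t.hasNode σ := by
  simp [hasNode, map]

lemma map_edgeProb (σ : List ℕ) : (t.map f).edgeProb σ = t.edgeProb σ := by
  simp only [edgeProb, map, Option.map_map]
  rfl

lemma map_pathProb (σ : List ℕ) : (t.map f).pathProb σ = t.pathProb σ := by
  induction σ with
  | nil => rfl
  | cons i σ ih => simp only [pathProb, map_edgeProb, ih]

open scoped Classical in
lemma map_finBranchProb : (t.map f).finBranchProb = t.finBranchProb := by
  funext k
  refine tsum_congr fun σ => if_congr ?_ (map_pathProb f t σ) rfl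
  simp only [IsLeaf, map_hasNode]

end PTree

/-- `T` is a process: it is closed and well-formed. -/
def Tm.IsProc (T : Tm Chan) : Prop := T.ClosedAt 0 ∧ T.WF

/-- `f` is a homomorphism of transition systems on the transition-closed set `P` of terms; there it
also reflects being a process. -/
structure TransitionHom (P : Set (Tm Chan)) (f : Tm Chan → Tm Chan) : Prop where
  isProc : ∀ {T}, T.IsProc → (f T).IsProc
  isProc_of_map : ∀ {T}, T ∈ P → (f T).IsProc → T.IsProc
  mem_of_step : ∀ {T l T'}, T ∈ P → Step T l T' → T' ∈ P
  step : ∀ {T l T'}, T ∈ P → Step T l T' → Step (f T) l (f T')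
  cstep : ∀ {T n ps Ts}, T ∈ P → CStep T n ps Ts → CStep (f T) n ps fun i => f (Ts i)

namespace TransitionHom

variable {P : Set (Tm Chan)} {f : Tm Chan → Tm Chan} (hf : TransitionHom P f)
  {E : Proc Chan → Proc Chan → Prop} {A : Proc Chan} {C : Set (Proc Chan)}

include hf in
lemma mem_of_node (hA : A.val ∈ P) {t : PTree Chan} (ht : IsSilentTree A t) {σ : List ℕ}
    {B : Proc Chan} {p : ℝ} (h : t.node σ = some (B, p)) : B.val ∈ P := by
  obtain ⟨hroot, hprefix, -, -, hedge⟩ := ht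
  induction σ generalizing B p with
  | nil =>
    obtain ⟨rfl, -⟩ : A = B ∧ 1 = p := by simpa using hroot.symm.trans h
    exact hA
  | cons i σ ih =>
    have hσ : t.hasNode σ := hprefix i σ (by simp [PTree.hasNode, h])
    obtain ⟨⟨D, q⟩, hD⟩ := Option.isSome_iff_exists.1 hσ
    exact hf.mem_of_step (ih hD) (hedge σ i D q B p hD h).2.2

/-- The action of a homomorphism on processes. -/
def onProc (A : Proc Chan) : Proc Chan := ⟨f A.val, hf.isProc A.property⟩

lemma inC_map_iff (hE : Equivalence E) (hrel : ∀ B : Proc Chan, B.val ∈ P → E B (hf.onProc B))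
    (hC : IsClass E C) {T : Tm Chan} (hT : T ∈ P) : inC C (f T) ↔ inC C T := by
  constructor
  · rintro ⟨Q, hQ, hQT⟩
    obtain ⟨B, rfl⟩ : ∃ B : Proc Chan, B.val = T :=
      ⟨⟨T, hf.isProc_of_map hT (hQT ▸ Q.property)⟩, rfl⟩
    obtain rfl : Q = hf.onProc B := Subtype.ext hQT
    exact ⟨B, (hC.mem_iff_of_rel hE (hrel B hT)).2 hQ, rfl⟩
  · rintro ⟨B, hB, rfl⟩
    exact ⟨hf.onProc B, (hC.mem_iff_of_rel hE (hrel B hT)).1 hB, rfl⟩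

open scoped Classical in
lemma collProb_map (hE : Equivalence E) (hrel : ∀ B : Proc Chan, B.val ∈ P → E B (hf.onProc B))
    (hC : IsClass E C) {n : ℕ} (ps : Fin n → ℝ) {Ts : Fin n → Tm Chan} (hT : ∀ i, Ts i ∈ P) :
    collProb C ps (fun i => f (Ts i)) = collProb C ps Ts :=
  Finset.sum_congr rfl fun i _ => if_congr (hf.inC_map_iff hE hrel hC (hT i)) rfl rfl

lemma isETree_map (hE : Equivalence E) (hrel : ∀ B : Proc Chan, B.val ∈ P → E B (hf.onProc B))
    (hA : A.val ∈ P) {t : PTree Chan} (ht : IsETree E A t) :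
    IsETree E (hf.onProc A) (t.map hf.onProc) := by
  have hmem {σ B p} (h : t.node σ = some (B, p)) : B.val ∈ P := hf.mem_of_node hA ht.1 h
  obtain ⟨⟨hroot, hprefix, hinit, hfin, hedge⟩, hclass, hrand, htau⟩ := ht
  simp only [IsETree, IsSilentTree, PTree.map_hasNode, PTree.map_node_eq_some]
  refine ⟨⟨⟨A, hroot, rfl⟩, hprefix, hinit, hfin, ?_⟩, ?_, ?_, ?_⟩
  · rintro σ i _ p _ p' ⟨B, hB, rfl⟩ ⟨B', hB', rfl⟩
    exact (hedge σ i B p B' p' hB hB').imp_right (And.imp_right (hf.step (hmem hB)))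
  · rintro σ _ p ⟨B, hB, rfl⟩
    exact hE.trans (hE.symm (hrel A hA)) (hE.trans (hclass σ B p hB) (hrel B (hmem hB)))
  · rintro σ i _ p _ q ⟨B, hB, rfl⟩ ⟨B', hB', rfl⟩ hq
    obtain ⟨n, ps, Ts, hs, hn, hchild⟩ := hrand σ i B p B' q hB hB' hq
    refine ⟨n, ps, _, hf.cstep (hmem hB) hs, hn, fun j => ?_⟩
    obtain ⟨D, hD, hnode⟩ := hchild j
    exact ⟨hf.onProc D, congrArg f hD, D, hnode, rfl⟩
  · rintro σ i _ p _ ⟨B, hB, rfl⟩ ⟨B', hB', rfl⟩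
    exact (htau σ i B p B' hB hB').imp_left (hf.step (hmem hB))

lemma lTrans_map (hE : Equivalence E) (hrel : ∀ B : Proc Chan, B.val ∈ P → E B (hf.onProc B))
    (hA : A.val ∈ P) (hC : IsClass E C) {l : Lab Chan} (h : LTrans E A l C) :
    LTrans E (hf.onProc A) l C := by
  obtain ⟨t, ht, hreg, hleaf⟩ := h
  refine ⟨_, hf.isETree_map hE hrel hA ht, by rwa [PTree.Regular, PTree.map_finBranchProb], ?_⟩
  simp only [PTree.map_node_eq_some, PTree.map_hasNode]
  rintro σ _ p ⟨L, hL, rfl⟩ hσ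
  obtain ⟨L', hL', hs⟩ := hleaf σ L p hL hσ
  have hLP : L.val ∈ P := hf.mem_of_node hA ht.1 hL
  exact ⟨hf.onProc L', (hC.mem_iff_of_rel hE (hrel L' (hf.mem_of_step hLP hs))).1 hL',
    hf.step hLP hs⟩

lemma qTrans_map (hE : Equivalence E) (hrel : ∀ B : Proc Chan, B.val ∈ P → E B (hf.onProc B))
    (hA : A.val ∈ P) (hC : IsClass E C) {q : ℝ} (h : QTrans E A q C) :
    QTrans E (hf.onProc A) q C := by
  obtain ⟨t, ht, hreg, hleaf⟩ := h
  refine ⟨_, hf.isETree_map hE hrel hA ht, by rwa [PTree.Regular, PTree.map_finBranchProb], ?_⟩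
  simp only [PTree.map_node_eq_some, PTree.map_hasNode]
  rintro σ _ p ⟨L, hL, rfl⟩ hσ
  obtain ⟨n, ps, Ts, hs, hq⟩ := hleaf σ L p hL hσ
  have hLP : L.val ∈ P := hf.mem_of_node hA ht.1 hL
  have hTs (i : Fin n) : Ts i ∈ P := hf.mem_of_step hLP (hs.step i)
  refine ⟨n, ps, _, hf.cstep hLP hs, ?_⟩
  rwa [← classOf_eq_of_rel hE (hrel A hA), hf.collProb_map hE hrel hC ps hTs,
    hf.collProb_map hE hrel ⟨A, rfl⟩ ps hTs]

lemma matches_onProc (hE : Equivalence E)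
    (hrel : ∀ B : Proc Chan, B.val ∈ P → E B (hf.onProc B)) (hA : A.val ∈ P) :
    Matches E A (hf.onProc A) where
  divergent := fun ⟨t, ht, hdiv⟩ => ⟨_, hf.isETree_map hE hrel hA ht, by
    rwa [PTree.Divergent, PTree.map_finBranchProb]⟩
  lTrans _ hC _ := hf.lTrans_map hE hrel hA hC
  qTrans _ _ hC _ := hf.qTrans_map hE hrel hA hC

end TransitionHom

/-! ### The residue `(c)(0 | A)` -/

/-- `(c)(0 | T)`, the term underlying `residue`. -/
def Tm.residue (c : Chan) (T : Tm Chan) : Tm Chan := .loc c (.par .nil T)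

/-- The inverse of `Tm.residue c` on residues `(c)(0 | T)`; other terms get an arbitrary value. -/
def Tm.unresidue : Tm Chan → Tm Chan
  | .loc _ (.par _ T) => T
  | T => T

section Residue

variable {c : Chan}

lemma Tm.isProc_residue_iff {T : Tm Chan} : (T.residue c).IsProc ↔ T.IsProc := by
  simp [IsProc, residue, nil, ClosedAt, WF]

lemma Tm.IsProc.unresidue {T : Tm Chan} (h : T.IsProc) : T.unresidue.IsProc := by
  unfold Tm.unresidue
  split
  · exact ⟨h.1.2, h.2.2⟩
  · exact h

lemma Tm.not_freeIn_residue (T : Tm Chan) : ¬ (T.residue c).FreeIn c := fun h => h.1 rfl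

lemma Step.residue {T T' : Tm Chan} {l : Lab Chan} (h : Step T l T') (hc : ¬ T.FreeIn c) :
    Step (T.residue c) l (T'.residue c) :=
  .loc c (.parR h) (fun e => hc (h.freeIn_of_label (.inl e)))
    (fun e => hc (h.freeIn_of_label (.inr e)))

lemma Step.residue_inv {T T' : Tm Chan} {l : Lab Chan} (h : Step (T.residue c) l T') :
    ∃ U, T' = U.residue c ∧ Step T l U := by
  cases h with
  | loc _ h _ _ =>
    cases h with
    | comL h _ | comR h _ | parL h => exact (not_step_nil h).elim
    | parR h => exact ⟨_, rfl, h⟩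

lemma CStep.residue {T : Tm Chan} {n : ℕ} {ps : Fin n → ℝ} {Ts : Fin n → Tm Chan}
    (h : CStep T n ps Ts) : CStep (T.residue c) n ps fun i => (Ts i).residue c :=
  .loc c (.parR h)

lemma CStep.residue_inv {T : Tm Chan} {n : ℕ} {ps : Fin n → ℝ} {Ts : Fin n → Tm Chan}
    (h : CStep (T.residue c) n ps Ts) :
    ∃ Us, (Ts = fun i => (Us i).residue c) ∧ CStep T n ps Us := by
  cases h with
  | loc _ h =>
    cases h with
    | parL h => cases h
    | parR h => exact ⟨_, rfl, h⟩

lemma transitionHom_residue (c : Chan) : TransitionHom {T | ¬ T.FreeIn c} (Tm.residue c) where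
  isProc := Tm.isProc_residue_iff.2
  isProc_of_map _ := Tm.isProc_residue_iff.1
  mem_of_step hT h hT' := hT (h.freeIn_of_target hT')
  step hT h := h.residue hT
  cstep _ h := h.residue

lemma transitionHom_unresidue (c : Chan) :
    TransitionHom (Tm.residue c '' {T | ¬ T.FreeIn c}) Tm.unresidue where
  isProc := Tm.IsProc.unresidue
  isProc_of_map := by
    rintro _ ⟨T, -, rfl⟩ h
    exact Tm.isProc_residue_iff.2 h
  mem_of_step := by
    rintro _ l _ ⟨T, hT, rfl⟩ h
    obtain ⟨U, rfl, hs⟩ := h.residue_inv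
    exact ⟨U, fun hU => hT (hs.freeIn_of_target hU), rfl⟩
  step := by
    rintro _ l _ ⟨T, -, rfl⟩ h
    obtain ⟨U, rfl, hs⟩ := h.residue_inv
    exact hs
  cstep := by
    rintro _ n ps _ ⟨T, -, rfl⟩ h
    obtain ⟨Us, rfl, hs⟩ := h.residue_inv
    exact hs

/-- `E` identifies every process without `c` with its residue. -/
def ResidueClosed (E : Proc Chan → Proc Chan → Prop) (c : Chan) : Prop :=
  ∀ A : Proc Chan, ¬ A.val.FreeIn c → E A (residue c A)

variable {E : Proc Chan → Proc Chan → Prop} {A : Proc Chan}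

lemma matches_residue (hE : Equivalence E) (hr : ResidueClosed E c) (hA : ¬ A.val.FreeIn c) :
    Matches E A (residue c A) :=
  (transitionHom_residue c).matches_onProc hE hr hA

lemma residue_matches (hE : Equivalence E) (hr : ResidueClosed E c) (hA : ¬ A.val.FreeIn c) :
    Matches E (residue c A) A := by
  refine (transitionHom_unresidue c).matches_onProc hE ?_ ⟨A.val, hA, rfl⟩
  rintro ⟨_, hB⟩ ⟨T, hT, rfl⟩
  exact hE.symm (hr ⟨T, Tm.isProc_residue_iff.1 hB⟩ hT)

lemma residue_injective (c : Chan) : Function.Injective (residue c) := fun _ _ h =>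
  Subtype.ext (congrArg (Tm.unresidue ∘ Subtype.val) h)

lemma not_freeIn_iterate_residue (hA : ¬ A.val.FreeIn c) (n : ℕ) :
    ¬ ((residue c)^[n] A).val.FreeIn c := by
  cases n with
  | zero => exact hA
  | succ n =>
    rw [Function.iterate_succ_apply']
    exact Tm.not_freeIn_residue _

lemma step_iterate_residue {B : Proc Chan} {l : Lab Chan} (hA : ¬ A.val.FreeIn c)
    (h : Step A.val l B.val) (n : ℕ) :
    Step ((residue c)^[n] A).val l ((residue c)^[n] B).val := by
  induction n with
  | zero => exact h
  | succ n ih =>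
    simp only [Function.iterate_succ_apply']
    exact ih.residue (not_freeIn_iterate_residue hA n)

lemma cstep_iterate_residue {m : ℕ} {ps : Fin m → ℝ} {B : Fin m → Proc Chan}
    (h : CStep A.val m ps fun i => (B i).val) (n : ℕ) :
    CStep ((residue c)^[n] A).val m ps fun i => ((residue c)^[n] (B i)).val := by
  induction n with
  | zero => exact h
  | succ n ih =>
    simp only [Function.iterate_succ_apply']
    exact ih.residue

lemma ResidueClosed.iterate (hE : Equivalence E) (hr : ResidueClosed E c)
    (hA : ¬ A.val.FreeIn c) (n : ℕ) : E A ((residue c)^[n] A) := by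
  induction n with
  | zero => exact hE.refl A
  | succ n ih =>
    rw [Function.iterate_succ_apply']
    exact hE.trans ih (hr _ (not_freeIn_iterate_residue hA n))

end Residue

/-! ### Regularity and divergence -/

namespace PTree

variable (t : PTree Chan)

/-- The subtree of `t` at the `i`-th child of the root. -/
def subtree (i : ℕ) : PTree Chan := ⟨fun σ => t.node (σ ++ [i])⟩

open scoped Classical in
/-- The contribution of the address `σ` to `P^k(t)`: the probability of the path to `σ` if `σ` is a
leaf of depth at most `k`, and `0` otherwise. -/
noncomputable def leafProb (k : ℕ) (σ : List ℕ) : ℝ :=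
  if t.IsLeaf σ ∧ σ.length ≤ k then t.pathProb σ else 0

lemma leafProb_of_isLeaf {k : ℕ} {σ : List ℕ} (h : t.IsLeaf σ) (hk : σ.length ≤ k) :
    t.leafProb k σ = t.pathProb σ := if_pos ⟨h, hk⟩

lemma leafProb_of_not_isLeaf {σ : List ℕ} (h : ¬ t.IsLeaf σ) (k : ℕ) : t.leafProb k σ = 0 :=
  if_neg fun h' => h h'.1

lemma leafProb_of_lt_length {k : ℕ} {σ : List ℕ} (hk : k < σ.length) : t.leafProb k σ = 0 :=
  if_neg fun h => hk.not_ge h.2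

lemma divergent_of_forall_not_isLeaf (h : ∀ σ, ¬ t.IsLeaf σ) : t.Divergent := by
  refine tendsto_const_nhds.congr fun k => ?_
  exact (hasSum_zero.tsum_eq.symm.trans
    (tsum_congr fun σ => (t.leafProb_of_not_isLeaf (h σ) k).symm))

variable {t}

lemma Regular.exists_leaf (h : t.Regular) :
    ∃ σ L p, t.node σ = some (L, p) ∧ ¬ t.hasNode (0 :: σ) := by
  obtain ⟨σ, hσ, hleaf⟩ : ∃ σ, t.IsLeaf σ := by
    by_contra! hn
    exact zero_ne_one (tendsto_nhds_unique (t.divergent_of_forall_not_isLeaf hn) h)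
  obtain ⟨⟨L, p⟩, hL⟩ := Option.isSome_iff_exists.1 hσ
  exact ⟨σ, L, p, hL, hleaf⟩

variable (t)

lemma pathProb_append_singleton (i : ℕ) (σ : List ℕ) :
    t.pathProb (σ ++ [i]) = t.edgeProb [i] * (t.subtree i).pathProb σ := by
  induction σ with
  | nil => rfl
  | cons j σ ih =>
    rw [List.cons_append, pathProb, ih, pathProb, mul_left_comm]
    rfl

open scoped Classical in
lemma leafProb_succ_append_singleton (k i : ℕ) (σ : List ℕ) :
    t.leafProb (k + 1) (σ ++ [i]) = t.edgeProb [i] * (t.subtree i).leafProb k σ := by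
  rw [leafProb, leafProb, mul_ite, mul_zero]
  exact if_congr (and_congr Iff.rfl (by simp)) (t.pathProb_append_singleton i σ) rfl

variable {t}

lemma hasSum_leafProb_zero (h : t.hasNode [0]) : HasSum (t.leafProb 0) 0 := by
  have hzero (σ : List ℕ) : t.leafProb 0 σ = 0 := by
    cases σ with
    | nil => exact t.leafProb_of_not_isLeaf (fun h' => h'.2 h) 0
    | cons i σ => exact t.leafProb_of_lt_length (by simp)
  exact hasSum_zero.congr_fun hzero

lemma hasSum_leafProb_succ {n k : ℕ} {q : Fin n → ℝ} (hroot : t.hasNode [0])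
    (hn : ∀ i σ, t.hasNode (σ ++ [i]) → i < n)
    (h : ∀ i : Fin n, HasSum ((t.subtree i).leafProb k) (q i)) :
    HasSum (t.leafProb (k + 1)) (∑ i : Fin n, t.edgeProb [(i : ℕ)] * q i) := by
  have hinj (i : ℕ) : Function.Injective fun σ : List ℕ => σ ++ [i] :=
    List.append_left_injective [i]
  have hsplit : t.leafProb (k + 1) = fun σ => ∑ i : Fin n, Function.extend (· ++ [(i : ℕ)])
      (fun τ => t.edgeProb [(i : ℕ)] * (t.subtree i).leafProb k τ) 0 σ := by
    funext σ
    rcases List.eq_nil_or_concat' σ with rfl | ⟨τ, j, rfl⟩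
    · rw [t.leafProb_of_not_isLeaf fun h => h.2 hroot, Finset.sum_eq_zero]
      intro i _
      exact Function.extend_apply' _ _ _ (by simp)
    · have hne {i : Fin n} (hij : (i : ℕ) ≠ j) : Function.extend (· ++ [(i : ℕ)])
          (fun τ => t.edgeProb [(i : ℕ)] * (t.subtree i).leafProb k τ) 0 (τ ++ [j]) = 0 :=
        Function.extend_apply' _ _ _ (by simpa using hij)
      by_cases hj : j < n
      · rw [Finset.sum_eq_single ⟨j, hj⟩ (fun i _ hi => hne fun e => hi (Fin.ext e)) (by simp),
          leafProb_succ_append_singleton, (hinj j).extend_apply]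
      · rw [t.leafProb_of_not_isLeaf fun h => hj (hn j τ h.1),
          Finset.sum_eq_zero fun i _ => hne fun e => hj (e ▸ i.isLt)]
  rw [hsplit]
  exact hasSum_sum fun i _ => (hasSum_extend_zero (hinj i)).2 ((h i).mul_left _)

end PTree

/-! ### Unfolding a system of silent moves -/

section Unfold

variable {S : Type*}

/-- The list `l` of successor states of `s`, with probabilities, is empty, the target of one
`τ`-transition, or lists the targets of one collective random transition. -/
inductive SilentMove (lab : S → Proc Chan) (s : S) : List (S × ℝ) → Prop
  | halt : SilentMove lab s []
  | tau {s' : S} (h : Step (lab s).val (.tau 1) (lab s').val) : SilentMove lab s [(s', 1)]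
  | rand {n : ℕ} {ps : Fin n → ℝ} {ss : Fin n → S}
      (h : CStep (lab s).val n ps fun i => (lab (ss i)).val) (hps : ∀ i, 0 < ps i ∧ ps i < 1) :
      SilentMove lab s (List.ofFn fun i => (ss i, ps i))

namespace SilentMove

variable {lab : S → Proc Chan} {s s' : S} {l : List (S × ℝ)} {p : ℝ}

lemma step (h : SilentMove lab s l) (hs' : (s', p) ∈ l) :
    0 < p ∧ p ≤ 1 ∧ Step (lab s).val (.tau p) (lab s').val := by
  cases h with
  | halt => simp at hs'
  | tau h =>
    obtain ⟨rfl, rfl⟩ : s' = _ ∧ p = 1 := by simpa using hs'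
    exact ⟨one_pos, le_rfl, h⟩
  | rand h hps =>
    obtain ⟨i, hi⟩ := List.mem_ofFn.1 hs'
    obtain ⟨rfl, rfl⟩ := Prod.mk.inj hi
    exact ⟨(hps i).1, (hps i).2.le, h.step i⟩

lemma exists_cstep (h : SilentMove lab s l) (hs' : (s', p) ∈ l) (hp : p < 1) :
    ∃ (n : ℕ) (ps : Fin n → ℝ) (ss : Fin n → S), l = List.ofFn (fun i => (ss i, ps i)) ∧
      CStep (lab s).val n ps fun i => (lab (ss i)).val := by
  cases h with
  | halt => simp at hs'
  | tau h =>
    obtain ⟨rfl, rfl⟩ : s' = _ ∧ p = 1 := by simpa using hs'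
    exact absurd hp (lt_irrefl 1)
  | rand h _ => exact ⟨_, _, _, rfl, h⟩

lemma eq_singleton (h : SilentMove lab s l) (hs' : (s', 1) ∈ l) : l = [(s', 1)] := by
  cases h with
  | halt => simp at hs'
  | tau h =>
    obtain rfl : s' = _ := by simpa using hs'
    rfl
  | rand h hps =>
    obtain ⟨i, hi⟩ := List.mem_ofFn.1 hs'
    exact absurd (Prod.mk.inj hi).2 (hps i).2.ne

end SilentMove

namespace PTree

variable (lab : S → Proc Chan) (nxt : S → List (S × ℝ))

/-- The state at an address when `nxt` is unfolded, with the probability of its incoming edge; the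
root carries `x`. -/
def unfoldState (x : S × ℝ) : List ℕ → Option (S × ℝ)
  | [] => some x
  | i :: σ => (unfoldState x σ).bind fun y => (nxt y.1)[i]?

/-- The tree obtained by unfolding `nxt` from the root `x`, with every state `s` labelled by
`lab s`. -/
def unfold (x : S × ℝ) : PTree Chan := ⟨fun σ => (unfoldState nxt x σ).map (Prod.map lab id)⟩

variable {lab nxt} {x : S × ℝ}

lemma unfoldState_append_singleton (σ : List ℕ) (i : ℕ) :
    unfoldState nxt x (σ ++ [i]) = (nxt x.1)[i]?.bind fun y => unfoldState nxt y σ := by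
  induction σ with
  | nil => simp [unfoldState]
  | cons j σ ih => simp only [List.cons_append, unfoldState, ih, Option.bind_assoc]

lemma unfold_subtree {i : ℕ} {y : S × ℝ} (h : (nxt x.1)[i]? = some y) :
    (unfold lab nxt x).subtree i = unfold lab nxt y := by
  simp only [subtree, unfold, unfoldState_append_singleton, h, Option.bind_some]

lemma unfold_node {σ : List ℕ} {B : Proc Chan} {p : ℝ} :
    (unfold lab nxt x).node σ = some (B, p) ↔
      ∃ s, unfoldState nxt x σ = some (s, p) ∧ lab s = B := by
  simp [unfold]

lemma unfold_hasNode {σ : List ℕ} :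
    (unfold lab nxt x).hasNode σ ↔ ∃ s p, unfoldState nxt x σ = some (s, p) := by
  simp [hasNode, unfold, Option.isSome_iff_exists]

lemma unfold_hasNode_cons {i : ℕ} {σ : List ℕ} {s : S} {p : ℝ}
    (h : unfoldState nxt x σ = some (s, p)) :
    (unfold lab nxt x).hasNode (i :: σ) ↔ i < (nxt s).length := by
  simp [hasNode, unfold, unfoldState, h]

lemma unfold_hasNode_singleton {i : ℕ} :
    (unfold lab nxt x).hasNode [i] ↔ i < (nxt x.1).length :=
  unfold_hasNode_cons (s := x.1) (p := x.2) rfl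

lemma unfold_edgeProb_singleton {i : ℕ} (hi : i < (nxt x.1).length) :
    (unfold lab nxt x).edgeProb [i] = (nxt x.1)[i].2 := by
  simp [edgeProb, unfold, unfoldState, hi]

lemma unfold_hasNode_of_cons {i : ℕ} {σ : List ℕ} (h : (unfold lab nxt x).hasNode (i :: σ)) :
    (unfold lab nxt x).hasNode σ := by
  obtain ⟨_, _, hi⟩ := unfold_hasNode.1 h
  obtain ⟨⟨s, p⟩, hs, _⟩ := Option.bind_eq_some_iff.1 hi
  exact unfold_hasNode.2 ⟨s, p, hs⟩

lemma unfold_hasNode_append_singleton {i : ℕ} {σ : List ℕ}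
    (h : (unfold lab nxt x).hasNode (σ ++ [i])) : i < (nxt x.1).length := by
  obtain ⟨_, _, hi⟩ := unfold_hasNode.1 h
  rw [unfoldState_append_singleton] at hi
  obtain ⟨_, hi, _⟩ := Option.bind_eq_some_iff.1 hi
  exact (List.getElem?_eq_some_iff.1 hi).1

lemma unfold_child {i : ℕ} {σ : List ℕ} {s : S} {p p' : ℝ} {B' : Proc Chan}
    (hs : unfoldState nxt x σ = some (s, p)) :
    (unfold lab nxt x).node (i :: σ) = some (B', p') ↔
      ∃ s', (nxt s)[i]? = some (s', p') ∧ lab s' = B' := by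
  simp only [unfold_node, unfoldState, hs, Option.bind_some]

lemma isSilentTree_unfold (h : ∀ s, SilentMove lab s (nxt s)) (s₀ : S) :
    IsSilentTree (lab s₀) (unfold lab nxt (s₀, 1)) := by
  refine ⟨rfl, fun i σ => unfold_hasNode_of_cons, ?_, ?_, ?_⟩
  · intro i j σ hij hi
    obtain ⟨s, p, hs⟩ := unfold_hasNode.1 (unfold_hasNode_of_cons hi)
    rw [unfold_hasNode_cons hs] at hi ⊢
    exact hij.trans_lt hi
  · intro σ
    by_cases hσ : (unfold lab nxt (s₀, 1)).hasNode σ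
    · obtain ⟨s, p, hs⟩ := unfold_hasNode.1 hσ
      exact ⟨(nxt s).length, fun i hi => by rwa [unfold_hasNode_cons hs, not_lt]⟩
    · exact ⟨0, fun i _ hi => hσ (unfold_hasNode_of_cons hi)⟩
  · intro σ i B p B' p' hB hB'
    obtain ⟨s, hs, rfl⟩ := unfold_node.1 hB
    obtain ⟨s', hs', rfl⟩ := (unfold_child hs).1 hB'
    exact (h s).step (List.mem_of_getElem? hs')

lemma isETree_unfold {E : Proc Chan → Proc Chan → Prop} (h : ∀ s, SilentMove lab s (nxt s))
    {s₀ : S} (hE : ∀ s, E (lab s₀) (lab s)) : IsETree E (lab s₀) (unfold lab nxt (s₀, 1)) := by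
  refine ⟨isSilentTree_unfold h s₀, ?_, ?_, ?_⟩
  · intro σ B p hB
    obtain ⟨s, -, rfl⟩ := unfold_node.1 hB
    exact hE s
  · intro σ i B p B' q hB hB' hq
    obtain ⟨s, hs, rfl⟩ := unfold_node.1 hB
    obtain ⟨s', hs', rfl⟩ := (unfold_child hs).1 hB'
    obtain ⟨n, ps, ss, hnxt, hstep⟩ := (h s).exists_cstep (List.mem_of_getElem? hs') hq
    refine ⟨n, ps, _, hstep, fun j => ?_, fun j => ⟨_, rfl, (unfold_child hs).2 ⟨ss j, ?_, rfl⟩⟩⟩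
    · rw [unfold_hasNode_cons hs, hnxt, List.length_ofFn]
    · simp [hnxt]
  · intro σ i B p B' hB hB'
    obtain ⟨s, hs, rfl⟩ := unfold_node.1 hB
    obtain ⟨s', hs', rfl⟩ := (unfold_child hs).1 hB'
    have hmem := List.mem_of_getElem? hs'
    have hlt : i < (nxt s).length := (List.getElem?_eq_some_iff.1 hs').1
    rw [unfold_hasNode_cons hs]
    rw [(h s).eq_singleton hmem, List.length_singleton] at hlt ⊢
    exact ⟨((h s).step hmem).2.2, by lia, by lia⟩

lemma divergent_unfold (h : ∀ s, nxt s ≠ []) : (unfold lab nxt x).Divergent := by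
  refine divergent_of_forall_not_isLeaf _ ?_
  rintro σ ⟨hσ, hleaf⟩
  obtain ⟨s, p, hs⟩ := unfold_hasNode.1 hσ
  exact hleaf ((unfold_hasNode_cons hs).2 (List.length_pos_of_ne_nil (h s)))

end PTree

/-- The probability that the process moving from each state to a random one of its successors under
`nxt` reaches a state without successors within `k` moves from `s`. -/
def haltProb (nxt : S → List (S × ℝ)) : ℕ → S → ℝ
  | 0, s => if nxt s = [] then 1 else 0
  | k + 1, s => if nxt s = [] then 1 else ((nxt s).map fun x => x.2 * haltProb nxt k x.1).sum

section HaltProb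

variable {lab : S → Proc Chan} {nxt : S → List (S × ℝ)}

lemma haltProb_of_eq_nil {s : S} (h : nxt s = []) (k : ℕ) : haltProb nxt k s = 1 := by
  cases k <;> simp only [haltProb, h, if_true]

lemma haltProb_zero_of_ne_nil {s : S} (h : nxt s ≠ []) : haltProb nxt 0 s = 0 := if_neg h

lemma haltProb_succ_of_ne_nil {s : S} (h : nxt s ≠ []) (k : ℕ) :
    haltProb nxt (k + 1) s = ((nxt s).map fun x => x.2 * haltProb nxt k x.1).sum := if_neg h

namespace PTree

lemma hasSum_leafProb_unfold_of_eq_nil {x : S × ℝ} (h : nxt x.1 = []) (k : ℕ) :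
    HasSum ((unfold lab nxt x).leafProb k) 1 := by
  have hleaf : (unfold lab nxt x).IsLeaf [] :=
    ⟨rfl, by simp [unfold_hasNode_singleton, h]⟩
  rw [← show (unfold lab nxt x).leafProb k [] = 1 from leafProb_of_isLeaf _ hleaf k.zero_le]
  refine hasSum_single [] fun σ hσ => leafProb_of_not_isLeaf _ (fun hσ' => ?_) k
  obtain ⟨τ, i, rfl⟩ := (List.eq_nil_or_concat' σ).resolve_left hσ
  simpa [h] using unfold_hasNode_append_singleton hσ'.1

lemma hasSum_leafProb_unfold (k : ℕ) (x : S × ℝ) :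
    HasSum ((unfold lab nxt x).leafProb k) (haltProb nxt k x.1) := by
  induction k generalizing x with
  | zero =>
    by_cases h : nxt x.1 = []
    · rw [haltProb_of_eq_nil h]
      exact hasSum_leafProb_unfold_of_eq_nil h 0
    · rw [haltProb_zero_of_ne_nil h]
      exact hasSum_leafProb_zero (unfold_hasNode_singleton.2 (List.length_pos_of_ne_nil h))
  | succ k ih =>
    by_cases h : nxt x.1 = []
    · rw [haltProb_of_eq_nil h]
      exact hasSum_leafProb_unfold_of_eq_nil h (k + 1)
    · rw [haltProb_succ_of_ne_nil h, ← Fin.sum_univ_fun_getElem]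
      have hchild (i : Fin (nxt x.1).length) : HasSum (((unfold lab nxt x).subtree i).leafProb k)
          (haltProb nxt k (nxt x.1)[(i : ℕ)].1) := by
        rw [unfold_subtree (List.getElem?_eq_getElem i.isLt)]
        exact ih _
      simpa only [unfold_edgeProb_singleton, Fin.is_lt] using hasSum_leafProb_succ
        (unfold_hasNode_singleton.2 (List.length_pos_of_ne_nil h))
        (fun i σ => unfold_hasNode_append_singleton) hchild

lemma regular_unfold {x : S × ℝ}
    (h : Filter.Tendsto (fun k => haltProb nxt k x.1) Filter.atTop (nhds 1)) :
    (unfold lab nxt x).Regular := by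
  refine h.congr fun k => ?_
  exact (hasSum_leafProb_unfold k x).tsum_eq.symm

end PTree

end HaltProb

end Unfold

/-! ### Transitions of `H`, `H_a`, `H_b` and `E` -/

/-- `(c)(c̄.0 | Σ_i α_i.T_i)`: the sum of the `α_i.T_i`, where a prefix `α_i = c` plays the role of
`τ`. -/
def tauSum (c : Chan) {n : ℕ} (α : Fin n → Chan ⊕ Chan) (T : Fin n → Tm Chan) : Tm Chan :=
  .loc c (.par (coNil c) (.sum n α T))

section TauSum

variable {c : Chan} {n : ℕ} {α : Fin n → Chan ⊕ Chan} {T : Fin n → Tm Chan}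

lemma inst_nil (k : ℕ) (S : Tm Chan) : Tm.inst k S Tm.nil = Tm.nil :=
  congrArg (Tm.sum 0 _) (funext fun i => i.elim0)

lemma inst_tauSum (k : ℕ) (S : Tm Chan) :
    Tm.inst k S (tauSum c α T) = tauSum c α fun i => Tm.inst k S (T i) := by
  simp only [tauSum, coNil, pfx, Tm.inst, inst_nil]

lemma guardLab_eq_name_iff {g : Chan ⊕ Chan} : guardLab g = .name c ↔ g = .inl c := by
  cases g <;> simp [guardLab]

lemma step_tauSum_tau {i : Fin n} (hi : α i = .inl c) :
    Step (tauSum c α T) (.tau 1) ((T i).residue c) := by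
  have hco : Step (coNil c) (.coname c) Tm.nil := .sum (α := fun _ => .inr c) (0 : Fin 1)
  have hname : Step (.sum n α T) (.name c) (T i) := by
    simpa only [hi, guardLab] using Step.sum (α := α) (T := T) i
  exact .loc c (.comR hco hname) nofun nofun

lemma step_tauSum_name {x : Chan} {i : Fin n} (hi : α i = .inl x) (hx : c ≠ x) :
    Step (tauSum c α T) (.name x) (.loc c (.par (coNil c) (T i))) := by
  have hname : Step (.sum n α T) (.name x) (T i) := by
    simpa only [hi, guardLab] using Step.sum (α := α) (T := T) i
  exact .loc c (.parR hname) (fun h => hx (Lab.name.inj h).symm) nofun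

lemma step_tauSum_inv {l : Lab Chan} {T' : Tm Chan} (h : Step (tauSum c α T) l T') :
    ∃ i, (α i = .inl c ∧ l = .tau 1 ∧ T' = (T i).residue c) ∨
      (α i ≠ .inl c ∧ l = guardLab (α i) ∧ T' = .loc c (.par (coNil c) (T i))) := by
  cases h with
  | loc _ h hname hconame =>
    cases h with
    | comL h _ =>
      obtain ⟨_, h, -⟩ := h.sum_inv
      cases h
    | comR h h' =>
      obtain ⟨_, h, rfl⟩ := h.sum_inv
      cases h
      obtain ⟨i, hi, rfl⟩ := h'.sum_inv
      exact ⟨i, .inl ⟨guardLab_eq_name_iff.1 hi.symm, rfl, rfl⟩⟩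
    | parL h =>
      obtain ⟨_, rfl, -⟩ := h.sum_inv
      exact absurd rfl hconame
    | parR h =>
      obtain ⟨i, rfl, rfl⟩ := h.sum_inv
      exact ⟨i, .inr ⟨fun e => hname (guardLab_eq_name_iff.2 e), rfl, rfl⟩⟩

end TauSum

section Concrete

variable (a b c : Chan)

lemma inst_plusTau (S : Tm Chan) :
    Tm.inst 0 S (plusTau a c Tm.nil (.var 0)) = plusTau a c Tm.nil S := by
  refine (inst_tauSum 0 S).trans (congrArg (tauSum c _) (funext fun i => ?_))
  fin_cases i
  exacts [inst_nil 0 S, rfl]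

lemma inst_plus3 (S : Tm Chan) : Tm.inst 0 S (plus3 a b c (.var 0)) = plus3 a b c S := by
  refine (inst_tauSum 0 S).trans (congrArg (tauSum c _) (funext fun i => ?_))
  fin_cases i
  exacts [inst_nil 0 S, inst_nil 0 S, rfl]

/-- The branches of the random choice in `H`: `H_a` for `true` and `H_b` for `false`. -/
noncomputable def branchP (g : Bool) : Proc Chan := cond g (HaP a b c) (HbP a b c)

lemma branchP_val (g : Bool) :
    (branchP a b c g).val = plusTau (cond g a b) c Tm.nil (Htm a b c) := by
  cases g <;> rfl

lemma not_freeIn_branchP (g : Bool) : ¬ (branchP a b c g).val.FreeIn c := by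
  rw [branchP_val]
  exact fun h => h.1 rfl

lemma inst_rand2_plusTau :
    Tm.inst 0 (Htm a b c)
      (rand2 (1/2) (1/2) (plusTau a c Tm.nil (.var 0)) (plusTau b c Tm.nil (.var 0))) =
    .rand 2 (fun _ => 1/2) (fun i => (branchP a b c (i == 0)).val) := by
  simp only [rand2, Tm.inst, Tm.rand.injEq, heq_eq_eq, true_and]
  constructor <;> funext i <;> fin_cases i <;> simp [inst_plusTau, branchP_val]

/-- `(c)(c̄.0 | 0)`, the inert process left by an external action of `H_a`, `H_b` or `E`. -/
def deadP : Proc Chan :=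
  ⟨.loc c (.par (coNil c) Tm.nil), by simp [coNil, pfx, Tm.nil, Tm.ClosedAt],
    by simp [coNil, pfx, Tm.nil, Tm.WF]⟩

lemma not_freeIn_deadP : ¬ (deadP c).val.FreeIn c := fun h => h.1 rfl

lemma cstep_HP :
    CStep (HP a b c).val 2 (fun _ => 1/2) (fun i => (branchP a b c (i == 0)).val) := by
  have h := CStep.rand (n := 2) (p := fun _ => 1/2) (T := fun i => (branchP a b c (i == 0)).val)
  rw [← inst_rand2_plusTau] at h
  exact .fix h

lemma step_branchP_tau (g : Bool) :
    Step (branchP a b c g).val (.tau 1) (residue c (HP a b c)).val := by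
  rw [branchP_val]
  exact step_tauSum_tau (i := (1 : Fin 2)) rfl

lemma step_EP_tau : Step (EP a b c).val (.tau 1) (residue c (EP a b c)).val := by
  refine .fix ?_
  rw [inst_plus3]
  exact step_tauSum_tau (i := (2 : Fin 3)) rfl

variable {a b c}

lemma step_branchP_name (hca : c ≠ a) (hcb : c ≠ b) (g : Bool) :
    Step (branchP a b c g).val (.name (cond g a b)) (deadP c).val := by
  rw [branchP_val]
  exact step_tauSum_name (i := (0 : Fin 2)) rfl (by cases g <;> assumption)

lemma step_EP_name (hca : c ≠ a) (hcb : c ≠ b) (g : Bool) :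
    Step (EP a b c).val (.name (cond g a b)) (deadP c).val := by
  refine .fix ?_
  rw [inst_plus3]
  cases g
  · exact step_tauSum_name (i := (1 : Fin 3)) rfl hcb
  · exact step_tauSum_name (i := (0 : Fin 3)) rfl hca

lemma step_HP_inv {l : Lab Chan} {T : Tm Chan} (h : Step (HP a b c).val l T) :
    l = .tau (1/2) ∧ ∃ g, T = (branchP a b c g).val := by
  cases h with
  | fix h =>
    rw [← Htm, inst_rand2_plusTau] at h
    cases h with
    | rand i => exact ⟨rfl, _, rfl⟩

lemma step_branchP_inv (hca : c ≠ a) (hcb : c ≠ b) {g : Bool} {l : Lab Chan} {T : Tm Chan}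
    (h : Step (branchP a b c g).val l T) :
    (l = .tau 1 ∧ T = (residue c (HP a b c)).val) ∨
      (l = .name (cond g a b) ∧ T = (deadP c).val) := by
  have hc : cond g a b ≠ c := by cases g <;> [exact hcb.symm; exact hca.symm]
  rw [branchP_val] at h
  obtain ⟨i, ⟨hi, rfl, rfl⟩ | ⟨hi, rfl, rfl⟩⟩ := step_tauSum_inv h <;> fin_cases i
  exacts [absurd (Sum.inl.inj hi) hc, .inl ⟨rfl, rfl⟩, .inr ⟨rfl, rfl⟩, absurd rfl hi]

lemma step_EP_inv (hca : c ≠ a) (hcb : c ≠ b) {l : Lab Chan} {T : Tm Chan}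
    (h : Step (EP a b c).val l T) :
    (l = .tau 1 ∧ T = (residue c (EP a b c)).val) ∨
      ((∃ g, l = .name (cond g a b)) ∧ T = (deadP c).val) := by
  cases h with
  | fix h =>
    rw [inst_plus3] at h
    obtain ⟨i, ⟨hi, rfl, rfl⟩ | ⟨hi, rfl, rfl⟩⟩ := step_tauSum_inv h <;> fin_cases i
    exacts [absurd (Sum.inl.inj hi).symm hca, absurd (Sum.inl.inj hi).symm hcb, .inl ⟨rfl, rfl⟩,
      .inr ⟨⟨true, rfl⟩, rfl⟩, .inr ⟨⟨false, rfl⟩, rfl⟩, absurd rfl hi]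

end Concrete

/-! ### The class of `H` -/

/-- The members of the class of `H`, up to residues: `H`, the two branches `H_a`, `H_b`, and the
external choice `E`. -/
inductive HKind
  | coin
  | branch (g : Bool)
  | choice

open HKind

/-- The process of a given kind. -/
noncomputable def HKind.proc (a b c : Chan) : HKind → Proc Chan
  | coin => HP a b c
  | branch g => branchP a b c g
  | choice => EP a b c

/-- The process of kind `s.1` inside `s.2` residues. -/
noncomputable def classProc (a b c : Chan) (s : HKind × ℕ) : Proc Chan :=
  (residue c)^[s.2] (s.1.proc a b c)

/-- A way to move silently within the class of `H`: for ever if `o = none`, until the action `a` is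
available if `o = some true`, and until `b` is available if `o = some false`. -/
noncomputable def strategy (o : Option Bool) : HKind × ℕ → List ((HKind × ℕ) × ℝ)
  | (coin, n) => [((branch true, n), 1/2), ((branch false, n), 1/2)]
  | (branch g, n) => if o = some g then [] else [((coin, n + 1), 1)]
  | (choice, n) => if o = none then [((choice, n + 1), 1)] else []

lemma haltProb_strategy_branch_self (g : Bool) (n k : ℕ) :
    haltProb (strategy (some g)) k (branch g, n) = 1 :=
  haltProb_of_eq_nil (by simp [strategy]) k

lemma haltProb_strategy_branch_succ {g g' : Bool} (h : g ≠ g') (n k : ℕ) :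
    haltProb (strategy (some g)) (k + 1) (branch g', n) =
      haltProb (strategy (some g)) k (coin, n + 1) := by
  simp [haltProb, strategy, h]

lemma haltProb_strategy_coin_succ (o : Option Bool) (n k : ℕ) :
    haltProb (strategy o) (k + 1) (coin, n) =
      1/2 * haltProb (strategy o) k (branch true, n) +
        1/2 * haltProb (strategy o) k (branch false, n) := by
  simp [haltProb, strategy]

lemma haltProb_strategy_coin_add_two (g : Bool) (n k : ℕ) :
    haltProb (strategy (some g)) (k + 2) (coin, n) =
      1/2 + 1/2 * haltProb (strategy (some g)) k (coin, n + 1) := by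
  rw [haltProb_strategy_coin_succ]
  cases g
  · rw [haltProb_strategy_branch_self, haltProb_strategy_branch_succ (by decide)]
    ring
  · rw [haltProb_strategy_branch_self, haltProb_strategy_branch_succ (by decide)]
    ring

lemma haltProb_strategy_coin (g : Bool) (k n : ℕ) :
    haltProb (strategy (some g)) k (coin, n) = 1 - (1/2) ^ ((k + 1) / 2) := by
  induction k using Nat.twoStepInduction generalizing n with
  | zero => simp [haltProb, strategy]
  | one =>
    rw [haltProb_strategy_coin_succ]
    cases g <;> norm_num [haltProb, strategy]
  | more k ih _ =>
    rw [haltProb_strategy_coin_add_two, ih, show (k + 2 + 1) / 2 = (k + 1) / 2 + 1 by lia, pow_succ]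
    ring

lemma tendsto_haltProb_strategy_coin (g : Bool) (n : ℕ) :
    Filter.Tendsto (fun k => haltProb (strategy (some g)) k (coin, n)) Filter.atTop (nhds 1) := by
  have hhalf : Filter.Tendsto (fun k : ℕ => (k + 1) / 2) Filter.atTop Filter.atTop :=
    (Nat.tendsto_div_const_atTop two_ne_zero).comp (Filter.tendsto_add_atTop_nat 1)
  have hpow : Filter.Tendsto (fun k : ℕ => ((1 : ℝ)/2) ^ k) Filter.atTop (nhds 0) :=
    tendsto_pow_atTop_nhds_zero_of_lt_one (by norm_num) (by norm_num)
  simp only [haltProb_strategy_coin]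
  simpa only [sub_zero, Function.comp_def] using (hpow.comp hhalf).const_sub 1

lemma tendsto_haltProb_strategy (g : Bool) (s : HKind × ℕ) :
    Filter.Tendsto (fun k => haltProb (strategy (some g)) k s) Filter.atTop (nhds 1) := by
  obtain ⟨_ | g' | _, n⟩ := s
  · exact tendsto_haltProb_strategy_coin g n
  · by_cases h : g = g'
    · subst h
      simp only [haltProb_strategy_branch_self, tendsto_const_nhds]
    · rw [← Filter.tendsto_add_atTop_iff_nat 1]
      simpa only [haltProb_strategy_branch_succ h] using tendsto_haltProb_strategy_coin g (n + 1)
  · simp only [haltProb_of_eq_nil (nxt := strategy (some g)) (s := (choice, n)) rfl,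
      tendsto_const_nhds]

lemma strategy_none_ne_nil (s : HKind × ℕ) : strategy none s ≠ [] := by
  obtain ⟨_ | _ | _, n⟩ := s <;> simp [strategy]

section HClass

variable {a b c : Chan}

lemma HKind.not_freeIn_proc (k : HKind) : ¬ (k.proc a b c).val.FreeIn c := by
  rcases k with _ | g | _
  · simp [HKind.proc, HP, Htm, rand2, plusTau, Tm.FreeIn]
  · exact not_freeIn_branchP a b c g
  · simp [HKind.proc, EP, Etm, plus3, Tm.FreeIn]

lemma classProc_succ (k : HKind) (n : ℕ) :
    classProc a b c (k, n + 1) = residue c (classProc a b c (k, n)) :=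
  Function.iterate_succ_apply' _ _ _

lemma silentMove_strategy (o : Option Bool) (s : HKind × ℕ) :
    SilentMove (classProc a b c) s (strategy o s) := by
  obtain ⟨_ | g | _, n⟩ := s
  · have hcoin : strategy o (coin, n) = List.ofFn fun i : Fin 2 => ((branch (i == 0), n), 1/2) := by
      simp [strategy, List.ofFn_succ]
    rw [hcoin]
    exact .rand (cstep_iterate_residue (cstep_HP a b c) n) fun _ => by norm_num
  · rw [strategy]
    split_ifs
    · exact .halt
    · exact .tau (step_iterate_residue (branch g).not_freeIn_proc (step_branchP_tau a b c g) n)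
  · rw [strategy]
    split_ifs
    · exact .tau (step_iterate_residue choice.not_freeIn_proc (step_EP_tau a b c) n)
    · exact .halt

lemma step_classProc_of_strategy_eq_nil (hca : c ≠ a) (hcb : c ≠ b) {g : Bool} {s : HKind × ℕ}
    (h : strategy (some g) s = []) :
    Step (classProc a b c s).val (.name (cond g a b)) ((residue c)^[s.2] (deadP c)).val := by
  obtain ⟨_ | g' | _, n⟩ := s
  · simp [strategy] at h
  · obtain rfl : g = g' := by simpa [strategy] using h
    exact step_iterate_residue (branch g).not_freeIn_proc (step_branchP_name hca hcb g) n
  · exact step_iterate_residue choice.not_freeIn_proc (step_EP_name hca hcb g) n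

lemma HKind.step_proc_inv (hca : c ≠ a) (hcb : c ≠ b) {k : HKind} {l : Lab Chan} {T : Tm Chan}
    (h : Step (k.proc a b c).val l T) :
    (∃ p s, l = .tau p ∧ T = (classProc a b c s).val) ∨
      ∃ g, l = .name (cond g a b) ∧ T = (deadP c).val := by
  rcases k with _ | g | _
  · obtain ⟨rfl, g, rfl⟩ := step_HP_inv h
    exact .inl ⟨_, (branch g, 0), rfl, rfl⟩
  · rcases step_branchP_inv hca hcb h with ⟨rfl, rfl⟩ | h
    · exact .inl ⟨_, (coin, 1), rfl, rfl⟩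
    · exact .inr ⟨g, h⟩
  · rcases step_EP_inv hca hcb h with ⟨rfl, rfl⟩ | ⟨⟨g, rfl⟩, rfl⟩
    · exact .inl ⟨_, (choice, 1), rfl, rfl⟩
    · exact .inr ⟨g, rfl, rfl⟩

lemma step_classProc_inv (hca : c ≠ a) (hcb : c ≠ b) {s : HKind × ℕ} {l : Lab Chan} {T : Tm Chan}
    (h : Step (classProc a b c s).val l T) :
    (∃ p s', l = .tau p ∧ T = (classProc a b c s').val) ∨
      ∃ g n, l = .name (cond g a b) ∧ T = ((residue c)^[n] (deadP c)).val := by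
  obtain ⟨k, n⟩ := s
  induction n generalizing T with
  | zero => exact (HKind.step_proc_inv hca hcb h).imp_right fun ⟨g, h⟩ => ⟨g, 0, h⟩
  | succ n ih =>
    rw [classProc_succ] at h
    obtain ⟨T, rfl, h'⟩ := h.residue_inv
    rcases ih h' with ⟨p, ⟨k', m⟩, rfl, rfl⟩ | ⟨g, m, rfl, rfl⟩
    · exact .inl ⟨p, (k', m + 1), rfl, by rw [classProc_succ]; rfl⟩
    · exact .inr ⟨g, m + 1, rfl, by rw [Function.iterate_succ_apply']; rfl⟩

variable {E : Proc Chan → Proc Chan → Prop} (hE : Equivalence E)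
  (hcl : classOf E (HP a b c) = Set.range (classProc a b c))

include hE hcl

lemma classOf_classProc (s : HKind × ℕ) :
    classOf E (classProc a b c s) = Set.range (classProc a b c) := by
  rw [← hcl]
  exact (IsClass.eq_classOf hE ⟨_, rfl⟩ (hcl ▸ Set.mem_range_self s)).symm

lemma rel_classProc (s s' : HKind × ℕ) : E (classProc a b c s) (classProc a b c s') := by
  change classProc a b c s' ∈ classOf E (classProc a b c s)
  rw [classOf_classProc hE hcl]
  exact Set.mem_range_self s'

lemma exists_divergent_classProc (s : HKind × ℕ) :
    ∃ t, IsETree E (classProc a b c s) t ∧ t.Divergent :=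
  ⟨_, PTree.isETree_unfold (silentMove_strategy none) (rel_classProc hE hcl s),
    PTree.divergent_unfold strategy_none_ne_nil⟩

lemma lTrans_classProc (hca : c ≠ a) (hcb : c ≠ b) (hr : ResidueClosed E c) (g : Bool)
    (s : HKind × ℕ) : LTrans E (classProc a b c s) (.name (cond g a b)) (classOf E (deadP c)) := by
  refine ⟨_, PTree.isETree_unfold (silentMove_strategy (some g)) (rel_classProc hE hcl s),
    PTree.regular_unfold (tendsto_haltProb_strategy g s), fun σ L p hL hleaf => ?_⟩
  obtain ⟨s', hs', rfl⟩ := PTree.unfold_node.1 hL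
  rw [PTree.unfold_hasNode_cons hs', List.length_pos_iff, not_not] at hleaf
  exact ⟨_, hr.iterate hE (not_freeIn_deadP c) s'.2,
    step_classProc_of_strategy_eq_nil hca hcb hleaf⟩

lemma lTrans_classProc_inv (hca : c ≠ a) (hcb : c ≠ b) (hr : ResidueClosed E c) {s : HKind × ℕ}
    {l : Lab Chan} {C : Set (Proc Chan)} (hl : l.IsAct) (hC : IsClass E C)
    (hlC : l ≠ .tau 1 ∨ C ≠ classOf E (classProc a b c s))
    (h : LTrans E (classProc a b c s) l C) :
    C = classOf E (deadP c) ∧ ∃ g, l = .name (cond g a b) := by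
  obtain ⟨t, ht, hreg, hleaf⟩ := h
  obtain ⟨σ, L, p, hL, hσ⟩ := hreg.exists_leaf
  obtain ⟨L', hL', hstep⟩ := hleaf σ L p hL hσ
  obtain ⟨s', rfl⟩ := (classOf_classProc hE hcl s).le (ht.2.1 σ L p hL)
  rcases step_classProc_inv hca hcb hstep with ⟨q, s'', rfl, hT⟩ | ⟨g, n, rfl, hT⟩ <;>
    obtain rfl := Subtype.ext hT <;>
    rw [hC.eq_classOf hE hL'] at hlC ⊢
  · obtain rfl : q = 1 := hl
    rw [classOf_classProc hE hcl, classOf_classProc hE hcl] at hlC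
    exact absurd hlC (by simp)
  · exact ⟨(classOf_eq_of_rel hE (hr.iterate hE (not_freeIn_deadP c) n)).symm, g, rfl⟩

lemma not_qTrans_classProc (hca : c ≠ a) (hcb : c ≠ b) {s : HKind × ℕ} {q : ℝ}
    {C : Set (Proc Chan)} (hq : 0 < q) (hC : IsClass E C)
    (hsC : C ≠ classOf E (classProc a b c s)) : ¬ QTrans E (classProc a b c s) q C := by
  rintro ⟨t, ht, hreg, hleaf⟩
  obtain ⟨σ, L, p, hL, hσ⟩ := hreg.exists_leaf
  obtain ⟨n, ps, Ts, hstep, hprob⟩ := hleaf σ L p hL hσ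
  obtain ⟨s', rfl⟩ := (classOf_classProc hE hcl s).le (ht.2.1 σ L p hL)
  have hzero : collProb C ps Ts = 0 := by
    refine Finset.sum_eq_zero fun i _ => if_neg ?_
    rintro ⟨L', hL', hT⟩
    rcases step_classProc_inv hca hcb (hstep.step i) with ⟨_, s'', _, hT'⟩ | ⟨g, m, hl, _⟩
    · obtain rfl := Subtype.ext (hT.trans hT')
      refine hsC ?_
      rw [hC.eq_classOf hE hL', classOf_classProc hE hcl, classOf_classProc hE hcl]
    · cases hl
  rw [hzero, zero_div] at hprob
  exact hq.ne hprob

lemma matches_classProc (hca : c ≠ a) (hcb : c ≠ b) (hr : ResidueClosed E c) (s s' : HKind × ℕ) :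
    Matches E (classProc a b c s) (classProc a b c s') where
  divergent _ := exists_divergent_classProc hE hcl s'
  lTrans hl hC hlC h := by
    obtain ⟨rfl, g, rfl⟩ := lTrans_classProc_inv hE hcl hca hcb hr hl hC hlC h
    exact lTrans_classProc hE hcl hca hcb hr g s'
  qTrans hq _ hC hsC h := (not_qTrans_classProc hE hcl hca hcb hq hC hsC h).elim

end HClass

/-! ### The bisimulation -/

/-- The pairs generating the bisimulation. -/
def hGen (a b c : Chan) (A B : Proc Chan) : Prop :=
  (A = HP a b c ∧ B = HaP a b c) ∨ (A = HP a b c ∧ B = HbP a b c) ∨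
    (A = HP a b c ∧ B = EP a b c) ∨ (¬ A.val.FreeIn c ∧ B = residue c A)

/-- The bisimulation relating `H` and `E`: the least equivalence containing `hGen`. -/
def hEqv (a b c : Chan) : Proc Chan → Proc Chan → Prop := Relation.EqvGen (hGen a b c)

section Bisimulation

variable {a b c : Chan}

variable (a b c) in
lemma equivalence_hEqv : Equivalence (hEqv a b c) := Relation.EqvGen.is_equivalence _

variable (a b c) in
lemma residueClosed_hEqv : ResidueClosed (hEqv a b c) c := fun _ hA =>
  .rel _ _ (.inr (.inr (.inr ⟨hA, rfl⟩)))

variable (a b c) in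
lemma hEqv_HP_EP : hEqv a b c (HP a b c) (EP a b c) := .rel _ _ (.inr (.inr (.inl ⟨rfl, rfl⟩)))

lemma hGen.exists_proc_or_residue {A B : Proc Chan} (h : hGen a b c A B) :
    (∃ k : HKind, A = HP a b c ∧ B = k.proc a b c) ∨ (¬ A.val.FreeIn c ∧ B = residue c A) := by
  rcases h with ⟨rfl, rfl⟩ | ⟨rfl, rfl⟩ | ⟨rfl, rfl⟩ | h
  exacts [.inl ⟨branch true, rfl, rfl⟩, .inl ⟨branch false, rfl, rfl⟩, .inl ⟨choice, rfl, rfl⟩,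
    .inr h]

lemma residue_ne_proc (k : HKind) (A : Proc Chan) : residue c A ≠ k.proc a b c := by
  intro h
  have hval := congrArg Subtype.val h
  rcases k with _ | g | _
  · cases hval
  · rw [HKind.proc, branchP_val] at hval
    simp [residue, plusTau, coNil, pfx, Tm.nil] at hval
  · cases hval

lemma residue_mem_range_classProc_iff {A : Proc Chan} :
    residue c A ∈ Set.range (classProc a b c) ↔ A ∈ Set.range (classProc a b c) := by
  constructor
  · rintro ⟨⟨k, _ | n⟩, h⟩
    · exact absurd h.symm (residue_ne_proc k A)
    · rw [classProc_succ] at h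
      exact ⟨(k, n), residue_injective c h⟩
  · rintro ⟨⟨k, n⟩, rfl⟩
    exact ⟨(k, n + 1), classProc_succ k n⟩

lemma hGen.mem_range_classProc_iff {A B : Proc Chan} (h : hGen a b c A B) :
    A ∈ Set.range (classProc a b c) ↔ B ∈ Set.range (classProc a b c) := by
  rcases h.exists_proc_or_residue with ⟨k, rfl, rfl⟩ | ⟨-, rfl⟩
  · exact iff_of_true ⟨(coin, 0), rfl⟩ ⟨(k, 0), rfl⟩
  · exact residue_mem_range_classProc_iff.symm

lemma hEqv_HP_classProc (s : HKind × ℕ) : hEqv a b c (HP a b c) (classProc a b c s) := by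
  have hproc : hEqv a b c (HP a b c) (s.1.proc a b c) := by
    rcases s.1 with _ | (_ | _) | _
    exacts [.refl _, .rel _ _ (.inr (.inl ⟨rfl, rfl⟩)), .rel _ _ (.inl ⟨rfl, rfl⟩),
      hEqv_HP_EP a b c]
  exact hproc.trans _ _ _
    ((residueClosed_hEqv a b c).iterate (equivalence_hEqv a b c) s.1.not_freeIn_proc s.2)

lemma hEqv.mem_range_classProc_iff {A B : Proc Chan} (h : hEqv a b c A B) :
    A ∈ Set.range (classProc a b c) ↔ B ∈ Set.range (classProc a b c) := by
  induction h with
  | rel A B h => exact h.mem_range_classProc_iff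
  | refl A => exact Iff.rfl
  | symm A B _ ih => exact ih.symm
  | trans A B D _ _ ih ih' => exact ih.trans ih'

variable (a b c) in
lemma classOf_hEqv : classOf (hEqv a b c) (HP a b c) = Set.range (classProc a b c) := by
  refine Set.Subset.antisymm (fun B h => ?_) (Set.range_subset_iff.2 hEqv_HP_classProc)
  exact (hEqv.mem_range_classProc_iff h).1 ⟨(coin, 0), rfl⟩

lemma isCBB_hEqv (hca : c ≠ a) (hcb : c ≠ b) : IsCBB (hEqv a b c) := by
  have hE := equivalence_hEqv a b c
  have hr := residueClosed_hEqv a b c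
  refine isCBB_eqvGen fun A B h => ?_
  rcases h.exists_proc_or_residue with ⟨k, rfl, rfl⟩ | ⟨hA, rfl⟩
  · have hmatch := matches_classProc hE (classOf_hEqv a b c) hca hcb hr
    exact ⟨hmatch (coin, 0) (k, 0), hmatch (k, 0) (coin, 0)⟩
  · exact ⟨matches_residue hE hr hA, residue_matches hE hr hA⟩

end Bisimulation

end

/-- Let `a`, `b`, `c` be distinct channels, with `c` the fresh channel used in the derived `τ`-prefix.
The equivalence closure of `{(H, H_a), (H, H_b), (H, E)}`, taken modulo the identification of
`A` with the residue `(c)(0 | A)` of a derived `τ`-prefix (`c` not free in `A`), is a codivergent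
branching bisimulation on `P_RCCS`; in particular `H =_RCCS E`. -/
theorem H_eq_E {Chan : Type*} (a b c : Chan)
    (hab : a ≠ b) (hca : c ≠ a) (hcb : c ≠ b) :
    IsCBB (Relation.EqvGen fun x y : Proc Chan =>
      (x = HP a b c ∧ y = HaP a b c) ∨ (x = HP a b c ∧ y = HbP a b c) ∨
      (x = HP a b c ∧ y = EP a b c) ∨
      (¬ Tm.FreeIn c x.val ∧ y = residue c x)) ∧
    RccsEq (HP a b c) (EP a b c) := by
  have h : IsCBB (hEqv a b c) := isCBB_hEqv hca hcb
  exact ⟨h, hEqv a b c, h, hEqv_HP_EP a b c⟩
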